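/- Each (state, position) pair is executed at most once by Memo-la (Lemma 8): For every run s of an execution of Memo-la, every state q ∈ P, and every position i ∈ {0, …, |w|}, the element C(q, i) appears at most once in s. -/

import Mathlib

namespace RegexMemo

/-! ## Generic runs, `φ`, `sub`, `sub*` -/

variable {α : Type}

/-- `φ_s(ℓ, n)`: the index of the result value of the call at index `ℓ`. -/
def phiAux (isRet : α → Bool) (s : List α) (ℓ n : ℕ) : Option ℕ :=
  match h : s[ℓ]? with
  | none => none
  | some e =>
    if isRet e then
      if n ≤ 1 then some ℓ
      else phiAux isRet s (ℓ + 1) (n - 1)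
    else phiAux isRet s (ℓ + 1) (n + 1)
termination_by s.length - ℓ
decreasing_by
  all_goals
    have hl : ℓ < s.length := by
      by_contra hc
      have : s[ℓ]? = none := List.getElem?_eq_none (by omega)
      simp [this] at h
    omega

/-- `φ_s(ℓ) = φ_s(ℓ, 0)`. -/
def phi (isRet : α → Bool) (s : List α) (ℓ : ℕ) : Option ℕ := phiAux isRet s ℓ 0

/-- `sub(s, ℓ)`: replace the memoization-table invocation at index `ℓ` (an element
`M(q,i)` together with its immediately following result) by `C(q,i)` followed by the
subsequence `s[ℓ'+1] … s[φ_s(ℓ')]`, where `ℓ'` is the first index with `s[ℓ'] = C(q,i)`.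
Here `m2c` maps a memoization element `M(q,i)` to the corresponding call element `C(q,i)`
(and everything else to `none`), and `isRet` recognizes result elements. -/
def subExpand [DecidableEq α] (m2c : α → Option α) (isRet : α → Bool)
    (s : List α) (ℓ : ℕ) : Option (List α) :=
  match s[ℓ]? with
  | some e =>
    match m2c e with
    | some c =>
      match s.findIdx? (· == c) with
      | some ℓ' =>
        match phi isRet s ℓ' with
        | some m =>
          some (s.take ℓ ++ [c] ++ ((s.drop (ℓ' + 1)).take (m - ℓ')) ++ s.drop (ℓ + 2))
        | none => none
      | none => none
    | none => none
  | none => none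

/-- `sub*`: repeatedly locate the first memoization element and expand it,
until no memoization element remains. `SubStar m2c isRet s t` means `sub*(s) = t`. -/
inductive SubStar [DecidableEq α] (m2c : α → Option α) (isRet : α → Bool) :
    List α → List α → Prop where
  | done {s : List α} : s.findIdx? (fun e => (m2c e).isSome) = none →
      SubStar m2c isRet s s
  | step {s s' t : List α} {ℓ : ℕ} :
      s.findIdx? (fun e => (m2c e).isSome) = some ℓ →
      subExpand m2c isRet s ℓ = some s' →
      SubStar m2c isRet s' t →
      SubStar m2c isRet s t

/-- The number of (recursive) calls recorded in a run: the number of `C`/`M` elements. -/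
def callCount (isCall : α → Bool) (s : List α) : ℕ := (s.filter isCall).length

variable {Sigma S : Type}

/-- Results of backtracking matching: `SuccessAt i'` or `Failure`. -/
inductive Result : Type where
  | successAt : ℕ → Result
  | failure : Result
deriving DecidableEq

/-! ## Plain NFAs -/

/-- Transitions of a plain NFA. -/
inductive Trans (Sigma S : Type) : Type where
  | eps : S → Trans Sigma S
  | branch : S → S → Trans Sigma S
  | char : Sigma → S → Trans Sigma S

/-- A (plain) NFA over the alphabet `Sigma` with (finite) state type `S`:
an initial state, a set of accepting states, and a transition function
(whose value is only relevant on non-accepting states). -/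
structure NFA (Sigma S : Type) where
  q0 : S
  F : Set S
  T : S → Trans Sigma S

/-- One ε-step: an `Eps` or `Branch` transition of a non-accepting state. -/
def NFA.epsStep (A : NFA Sigma S) (q q' : S) : Prop :=
  q ∉ A.F ∧ (A.T q = Trans.eps q' ∨ (∃ q'', A.T q = Trans.branch q' q'') ∨
    (∃ q'', A.T q = Trans.branch q'' q'))

/-- The NFA has no ε-loops. -/
def NFA.NoEpsLoops (A : NFA Sigma S) : Prop :=
  ∀ q : S, ¬ Relation.TransGen A.epsStep q q

open Classical in
/-- The in-degree `#in(q)` of a state of a plain NFA. -/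
noncomputable def NFA.inDeg [Fintype S] (A : NFA Sigma S) (q : S) : ℕ :=
  (Finset.univ.filter fun q' : S => q' ∉ A.F ∧ A.T q' = Trans.eps q).card +
  (Finset.univ.filter fun q' : S => q' ∉ A.F ∧ ∃ σ, A.T q' = Trans.char σ q).card +
  (Finset.univ.filter fun q' : S => q' ∉ A.F ∧ ∃ q'', A.T q' = Trans.branch q q'').card +
  (Finset.univ.filter fun q' : S => q' ∉ A.F ∧ ∃ q'', A.T q' = Trans.branch q'' q).card +
  (if q = A.q0 then 1 else 0)

/-- The maximal in-degree `#in(A)` of a plain NFA. -/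
noncomputable def NFA.inDegMax [Fintype S] (A : NFA Sigma S) : ℕ :=
  Finset.univ.sup fun q : S => A.inDeg q

/-- Elements of runs of `Match`/`Memo`: calls `C(q,i)`, memoization-table invocations
`M(q,i)`, and results `S(i')` and `F`. -/
inductive RunElem (S : Type) : Type where
  | call : S → ℕ → RunElem S
  | memo : S → ℕ → RunElem S
  | succ : ℕ → RunElem S
  | fail : RunElem S
deriving DecidableEq

/-- The run element recording the return of a result. -/
def Result.elem {S : Type} : Result → RunElem S
  | .successAt i => .succ i
  | .failure => .fail

def RunElem.isRet : RunElem S → Bool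
  | .succ _ => true
  | .fail => true
  | _ => false

def RunElem.isCall : RunElem S → Bool
  | .call _ _ => true
  | .memo _ _ => true
  | _ => false

/-- `M(q,i) ↦ C(q,i)`. -/
def memoToCall : RunElem S → Option (RunElem S)
  | .memo q i => some (.call q i)
  | _ => none

/-- Big-step semantics (together with the produced run) of the backtracking
matching algorithm `Match` for plain NFAs:
`MatchRun A w q i r s` means the call `Match_{A,w}(q, i)` terminates with
result `r` and produces the run `s`. -/
inductive MatchRun (A : NFA Sigma S) (w : List Sigma) :
    S → ℕ → Result → List (RunElem S) → Prop where
  | accept {q : S} {i : ℕ} : q ∈ A.F →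
      MatchRun A w q i (.successAt i) [.call q i, .succ i]
  | eps {q q' : S} {i : ℕ} {r : Result} {s : List (RunElem S)} :
      q ∉ A.F → A.T q = Trans.eps q' →
      MatchRun A w q' i r s →
      MatchRun A w q i r (.call q i :: s ++ [r.elem])
  | branchSucc {q q' q'' : S} {i i' : ℕ} {s : List (RunElem S)} :
      q ∉ A.F → A.T q = Trans.branch q' q'' →
      MatchRun A w q' i (.successAt i') s →
      MatchRun A w q i (.successAt i') (.call q i :: s ++ [RunElem.succ i'])
  | branchFail {q q' q'' : S} {i : ℕ} {r : Result} {s s' : List (RunElem S)} :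
      q ∉ A.F → A.T q = Trans.branch q' q'' →
      MatchRun A w q' i .failure s →
      MatchRun A w q'' i r s' →
      MatchRun A w q i r (.call q i :: s ++ s' ++ [r.elem])
  | charSucc {q q' : S} {σ : Sigma} {i : ℕ} {r : Result} {s : List (RunElem S)} :
      q ∉ A.F → A.T q = Trans.char σ q' →
      w[i]? = some σ →
      MatchRun A w q' (i + 1) r s →
      MatchRun A w q i r (.call q i :: s ++ [r.elem])
  | charFail {q q' : S} {σ : Sigma} {i : ℕ} :
      q ∉ A.F → A.T q = Trans.char σ q' →
      w[i]? ≠ some σ →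
      MatchRun A w q i .failure [.call q i, .fail]

/-- Record `M(q,i) := Failure` in the memoization table if the result is a failure. -/
def recFail [DecidableEq S] (M : S × ℕ → Bool) (q : S) (i : ℕ) : Result → (S × ℕ → Bool)
  | .failure => fun p => if p = (q, i) then true else M p
  | _ => M

/-- Big-step semantics (with resulting memoization table and produced run) of the
memoized backtracking matching algorithm `Memo` for plain NFAs:
`MemoRun A w q i M M' r s` means the call `Memo^M_{A,w}(q, i)` terminates with result
`r`, final memoization table `M'` (where `M p = true` means `Failure` is recorded at the
key `p`), and produces the run `s`. -/
inductive MemoRun [DecidableEq S] (A : NFA Sigma S) (w : List Sigma) :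
    S → ℕ → (S × ℕ → Bool) → (S × ℕ → Bool) → Result → List (RunElem S) → Prop where
  | memoHit {q : S} {i : ℕ} {M : S × ℕ → Bool} : M (q, i) = true →
      MemoRun A w q i M M .failure [.memo q i, .fail]
  | accept {q : S} {i : ℕ} {M : S × ℕ → Bool} : M (q, i) = false → q ∈ A.F →
      MemoRun A w q i M M (.successAt i) [.call q i, .succ i]
  | eps {q q' : S} {i : ℕ} {M M' : S × ℕ → Bool} {r : Result} {s : List (RunElem S)} :
      M (q, i) = false → q ∉ A.F → A.T q = Trans.eps q' →
      MemoRun A w q' i M M' r s →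
      MemoRun A w q i M (recFail M' q i r) r (.call q i :: s ++ [r.elem])
  | branchSucc {q q' q'' : S} {i i' : ℕ} {M M' : S × ℕ → Bool} {s : List (RunElem S)} :
      M (q, i) = false → q ∉ A.F → A.T q = Trans.branch q' q'' →
      MemoRun A w q' i M M' (.successAt i') s →
      MemoRun A w q i M M' (.successAt i') (.call q i :: s ++ [RunElem.succ i'])
  | branchFail {q q' q'' : S} {i : ℕ} {M M' M'' : S × ℕ → Bool} {r : Result}
      {s s' : List (RunElem S)} :
      M (q, i) = false → q ∉ A.F → A.T q = Trans.branch q' q'' →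
      MemoRun A w q' i M M' .failure s →
      MemoRun A w q'' i M' M'' r s' →
      MemoRun A w q i M (recFail M'' q i r) r (.call q i :: s ++ s' ++ [r.elem])
  | charSucc {q q' : S} {σ : Sigma} {i : ℕ} {M M' : S × ℕ → Bool} {r : Result}
      {s : List (RunElem S)} :
      M (q, i) = false → q ∉ A.F → A.T q = Trans.char σ q' →
      w[i]? = some σ →
      MemoRun A w q' (i + 1) M M' r s →
      MemoRun A w q i M (recFail M' q i r) r (.call q i :: s ++ [r.elem])
  | charFail {q q' : S} {σ : Sigma} {i : ℕ} {M : S × ℕ → Bool} :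
      M (q, i) = false → q ∉ A.F → A.T q = Trans.char σ q' →
      w[i]? ≠ some σ →
      MemoRun A w q i M (recFail M q i .failure) .failure [.call q i, .fail]

/-! ## NFAs with sub-automata -/

/-- Kind labels of sub-automaton transitions: positive/negative look-ahead/look-behind
and atomic grouping. -/
inductive Kind : Type where
  | pla | nla | plb | nlb | at
deriving DecidableEq

mutual
/-- An NFA with sub-automata `⟨Q, q0, F, T⟩`: a list of top-level states, an initial
state, accepting states, and a transition function (relevant on non-accepting top-level
states) whose transitions may be labelled with further NFAs with sub-automata. -/
inductive SubNFA (Sigma S : Type) : Type where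
  | mk : List S → S → List S → (S → SubTrans Sigma S) → SubNFA Sigma S

/-- Transitions of an NFA with sub-automata. -/
inductive SubTrans (Sigma S : Type) : Type where
  | eps : S → SubTrans Sigma S
  | branch : S → S → SubTrans Sigma S
  | char : Sigma → S → SubTrans Sigma S
  | sub : Kind → SubNFA Sigma S → S → SubTrans Sigma S
end

/-- Top-level states `Q`. -/
def SubNFA.Q : SubNFA Sigma S → List S
  | .mk Q _ _ _ => Q

/-- Initial state `q0`. -/
def SubNFA.q0 : SubNFA Sigma S → S
  | .mk _ q0 _ _ => q0

/-- Accepting states `F`. -/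
def SubNFA.F : SubNFA Sigma S → List S
  | .mk _ _ F _ => F

/-- Transition function `T`. -/
def SubNFA.T : SubNFA Sigma S → S → SubTrans Sigma S
  | .mk _ _ _ T => T

mutual
/-- All automata occurring within an NFA with sub-automata (including itself), each
together with its nesting depth of atomic grouping (the number of enclosing
`at`-sub-automaton boundaries). -/
def SubNFA.compsD : SubNFA Sigma S → List (SubNFA Sigma S × ℕ)
  | .mk Q q0 F T => (.mk Q q0 F T, 0) :: Q.flatMap (fun q => SubTrans.subCompsD (T q))

def SubTrans.subCompsD : SubTrans Sigma S → List (SubNFA Sigma S × ℕ)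
  | .sub k A' _ => (SubNFA.compsD A').map (fun p => (p.1, p.2 + (if k = Kind.at then 1 else 0)))
  | _ => []
end

/-- All automata occurring within `A` (including `A` itself). -/
def SubNFA.comps (A : SubNFA Sigma S) : List (SubNFA Sigma S) :=
  A.compsD.map Prod.fst

/-- The set (list) of all states `P` occurring within `A`. -/
def SubNFA.allStates (A : SubNFA Sigma S) : List S :=
  A.comps.flatMap SubNFA.Q

/-- The nesting depth of atomic grouping `ν_A(q)` of a state `q` of `A`. -/
def SubNFA.nu [DecidableEq S] (A : SubNFA Sigma S) (q : S) : ℕ :=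
  (A.compsD.map (fun p => if q ∈ p.1.Q then p.2 else 0)).sum

/-- The maximal nesting depth of atomic grouping `ν(A)`. -/
def SubNFA.nuMax [DecidableEq S] (A : SubNFA Sigma S) : ℕ :=
  (A.allStates.map A.nu).foldr max 0

/-- Local wellformedness of one automaton: the initial state is a top-level state,
accepting states are top-level states, and transitions of non-accepting top-level
states lead to top-level states. -/
def SubNFA.LocalOK (B : SubNFA Sigma S) : Prop :=
  B.q0 ∈ B.Q ∧ (∀ f ∈ B.F, f ∈ B.Q) ∧ ∀ q ∈ B.Q, q ∉ B.F →
    match B.T q with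
    | .eps q' => q' ∈ B.Q
    | .branch q' q'' => q' ∈ B.Q ∧ q'' ∈ B.Q
    | .char _ q' => q' ∈ B.Q
    | .sub _ _ q' => q' ∈ B.Q

/-- Wellformedness of an NFA with sub-automata: every component automaton is locally
wellformed, and all the state lists are disjoint and duplicate-free (so that `P` is
the disjoint union of the top-level state sets of all components). -/
def SubNFA.WF (A : SubNFA Sigma S) : Prop :=
  (∀ B ∈ A.comps, B.LocalOK) ∧ A.allStates.Nodup

/-- The kind labels of all sub-automaton transitions occurring in `A`. -/
def SubNFA.kinds [DecidableEq S] (A : SubNFA Sigma S) : List Kind :=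
  A.comps.flatMap fun B =>
    (B.Q.filter (fun q => decide (q ∉ B.F))).filterMap fun q =>
      match B.T q with
      | .sub k _ _ => some k
      | _ => none

/-- A la-NFA: all kind labels are look-around labels (for simplicity, only positive
look-ahead `pla` is treated). -/
def SubNFA.IsLaNFA [DecidableEq S] (A : SubNFA Sigma S) : Prop :=
  ∀ k ∈ A.kinds, k = Kind.pla

/-- An at-NFA: all kind labels are `at` (atomic grouping). -/
def SubNFA.IsAtNFA [DecidableEq S] (A : SubNFA Sigma S) : Prop :=
  ∀ k ∈ A.kinds, k = Kind.at

/-- A (la,at)-NFA in which (for simplicity) only the kinds `pla` and `at` occur. -/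
def SubNFA.IsLaAtNFA [DecidableEq S] (A : SubNFA Sigma S) : Prop :=
  ∀ k ∈ A.kinds, k = Kind.pla ∨ k = Kind.at

/-- One global ε-step of an NFA with sub-automata: an `Eps` or `Branch` transition, or a
`Sub` transition with a look-around kind (from the transition's source to its successor),
of a non-accepting top-level state of any component automaton. -/
def SubNFA.epsStep (A : SubNFA Sigma S) (q q' : S) : Prop :=
  ∃ B ∈ A.comps, q ∈ B.Q ∧ q ∉ B.F ∧
    (B.T q = SubTrans.eps q' ∨
     (∃ q'', B.T q = SubTrans.branch q' q'') ∨
     (∃ q'', B.T q = SubTrans.branch q'' q') ∨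
     (∃ k A'', B.T q = SubTrans.sub k A'' q' ∧ k ≠ Kind.at))

/-- The NFA with sub-automata has no ε-loops. -/
def SubNFA.NoEpsLoops (A : SubNFA Sigma S) : Prop :=
  ∀ q : S, ¬ Relation.TransGen A.epsStep q q

/-- All pairs (state, transition) of non-accepting top-level states of all component
automata of `A`. -/
def SubNFA.allTransNF [DecidableEq S] (A : SubNFA Sigma S) : List (S × SubTrans Sigma S) :=
  A.comps.flatMap fun B => (B.Q.filter (fun q => decide (q ∉ B.F))).map fun q => (q, B.T q)

/-- How many of the buckets in the definition of the in-degree of `q` a given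
transition contributes to. -/
def SubTrans.hits [DecidableEq S] (t : SubTrans Sigma S) (q : S) : ℕ :=
  match t with
  | .eps q' => if q' = q then 1 else 0
  | .char _ q' => if q' = q then 1 else 0
  | .branch q' q'' => (if q' = q then 1 else 0) + (if q'' = q then 1 else 0)
  | .sub _ _ q' => if q' = q then 1 else 0

/-- The in-degree `#in(q)` of a state of an NFA with sub-automata. -/
def SubNFA.inDeg [DecidableEq S] (A : SubNFA Sigma S) (q : S) : ℕ :=
  (A.allTransNF.map (fun p => p.2.hits q)).sum +
  (if q ∈ A.comps.map SubNFA.q0 then 1 else 0)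

/-- The maximal in-degree `#in(A)`. -/
def SubNFA.inDegMax [DecidableEq S] (A : SubNFA Sigma S) : ℕ :=
  (A.allStates.map A.inDeg).foldr max 0

/-! ## run elements for `Memo-la` and `Match-(la,at)` -/

/-- Elements of runs of `Memo-la` (and of `Match-(la,at)`): calls `C(q,i)`,
memoization-table invocations `M(q,i)`, and the results `S(i')`, `S'` (bare success),
and `F`. -/
inductive LaRunElem (S : Type) : Type where
  | call : S → ℕ → LaRunElem S
  | memo : S → ℕ → LaRunElem S
  | succAt : ℕ → LaRunElem S
  | succ : LaRunElem S
  | fail : LaRunElem S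
deriving DecidableEq

def LaRunElem.isRet : LaRunElem S → Bool
  | .succAt _ => true
  | .succ => true
  | .fail => true
  | _ => false

def LaRunElem.isCall : LaRunElem S → Bool
  | .call _ _ => true
  | .memo _ _ => true
  | _ => false

def laMemoToCall : LaRunElem S → Option (LaRunElem S)
  | .memo q i => some (.call q i)
  | _ => none

def Result.laElem {S : Type} : Result → LaRunElem S
  | .successAt i => .succAt i
  | .failure => .fail

/-! ## The backtracking matching algorithm `Match-(la,at)` -/

/-- Big-step semantics (with produced run) of the backtracking matching algorithm
`Match-(la,at)` for NFAs with sub-automata: `LAMatchRun w A q i r s` means the call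
`Match-(la,at)_{A,w}(q, i)` terminates with result `r` and produces the run `s`.
For simplicity, only the look-around kind `pla` (besides `at`) is treated. -/
inductive LAMatchRun (w : List Sigma) :
    SubNFA Sigma S → S → ℕ → Result → List (LaRunElem S) → Prop where
  | accept {A : SubNFA Sigma S} {q : S} {i : ℕ} : q ∈ A.F →
      LAMatchRun w A q i (.successAt i) [.call q i, .succAt i]
  | eps {A : SubNFA Sigma S} {q q' : S} {i : ℕ} {r : Result} {s : List (LaRunElem S)} :
      q ∉ A.F → A.T q = SubTrans.eps q' →
      LAMatchRun w A q' i r s →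
      LAMatchRun w A q i r (.call q i :: s ++ [r.laElem])
  | branchSucc {A : SubNFA Sigma S} {q q' q'' : S} {i i' : ℕ} {s : List (LaRunElem S)} :
      q ∉ A.F → A.T q = SubTrans.branch q' q'' →
      LAMatchRun w A q' i (.successAt i') s →
      LAMatchRun w A q i (.successAt i') (.call q i :: s ++ [LaRunElem.succAt i'])
  | branchFail {A : SubNFA Sigma S} {q q' q'' : S} {i : ℕ} {r : Result}
      {s s' : List (LaRunElem S)} :
      q ∉ A.F → A.T q = SubTrans.branch q' q'' →
      LAMatchRun w A q' i .failure s →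
      LAMatchRun w A q'' i r s' →
      LAMatchRun w A q i r (.call q i :: s ++ s' ++ [r.laElem])
  | charSucc {A : SubNFA Sigma S} {q q' : S} {σ : Sigma} {i : ℕ} {r : Result}
      {s : List (LaRunElem S)} :
      q ∉ A.F → A.T q = SubTrans.char σ q' →
      w[i]? = some σ →
      LAMatchRun w A q' (i + 1) r s →
      LAMatchRun w A q i r (.call q i :: s ++ [r.laElem])
  | charFail {A : SubNFA Sigma S} {q q' : S} {σ : Sigma} {i : ℕ} :
      q ∉ A.F → A.T q = SubTrans.char σ q' →
      w[i]? ≠ some σ →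
      LAMatchRun w A q i .failure [.call q i, .fail]
  | plaSucc {A A' : SubNFA Sigma S} {q q' : S} {i i' : ℕ} {r : Result}
      {s1 s2 : List (LaRunElem S)} :
      q ∉ A.F → A.T q = SubTrans.sub Kind.pla A' q' →
      LAMatchRun w A' A'.q0 i (.successAt i') s1 →
      LAMatchRun w A q' i r s2 →
      LAMatchRun w A q i r (.call q i :: s1 ++ s2 ++ [r.laElem])
  | plaFail {A A' : SubNFA Sigma S} {q q' : S} {i : ℕ} {s1 : List (LaRunElem S)} :
      q ∉ A.F → A.T q = SubTrans.sub Kind.pla A' q' →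
      LAMatchRun w A' A'.q0 i .failure s1 →
      LAMatchRun w A q i .failure (.call q i :: s1 ++ [LaRunElem.fail])
  | atSucc {A A' : SubNFA Sigma S} {q q' : S} {i i' : ℕ} {r : Result}
      {s1 s2 : List (LaRunElem S)} :
      q ∉ A.F → A.T q = SubTrans.sub Kind.at A' q' →
      LAMatchRun w A' A'.q0 i (.successAt i') s1 →
      LAMatchRun w A q' i' r s2 →
      LAMatchRun w A q i r (.call q i :: s1 ++ s2 ++ [r.laElem])
  | atFail {A A' : SubNFA Sigma S} {q q' : S} {i : ℕ} {s1 : List (LaRunElem S)} :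
      q ∉ A.F → A.T q = SubTrans.sub Kind.at A' q' →
      LAMatchRun w A' A'.q0 i .failure s1 →
      LAMatchRun w A q i .failure (.call q i :: s1 ++ [LaRunElem.fail])

/-! ## `Memo-la` -/

/-- Values of the memoization table of `Memo-la`: `Failure` or `Success`. -/
inductive LaVal : Type where
  | success : LaVal
  | failure : LaVal
deriving DecidableEq

/-- Results of `Memo-la`: `SuccessAt i'`, bare `Success`, or `Failure`. -/
inductive LaResult : Type where
  | successAt : ℕ → LaResult
  | success : LaResult
  | failure : LaResult
deriving DecidableEq

def LaVal.toResult : LaVal → LaResult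
  | .success => .success
  | .failure => .failure

def LaResult.elem {S : Type} : LaResult → LaRunElem S
  | .successAt i => .succAt i
  | .success => .succ
  | .failure => .fail

def Result.toLa : Result → LaResult
  | .successAt i => .successAt i
  | .failure => .failure

/-- The final recording of `Memo-la`: `M(q,i) := Success` if the result is
`SuccessAt i'` or `Success`, and `M(q,i) := Failure` if the result is `Failure`. -/
def laRecord [DecidableEq S] (M : S × ℕ → Option LaVal) (q : S) (i : ℕ) (r : LaResult) :
    S × ℕ → Option LaVal :=
  fun p => if p = (q, i) then
    some (match r with | .failure => LaVal.failure | _ => LaVal.success)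
  else M p

/-- Big-step semantics (with resulting memoization table and produced run) of the
memoized backtracking matching algorithm `Memo-la` for la-NFAs:
`MemoLaRun w A q i M M' r s` means the call `Memo-la^M_{A,w}(q, i)` terminates with
result `r`, final memoization table `M'`, and produces the run `s`. The memoization
table is shared between the top-level automaton and all sub-automata. -/
inductive MemoLaRun [DecidableEq S] (w : List Sigma) :
    SubNFA Sigma S → S → ℕ → (S × ℕ → Option LaVal) → (S × ℕ → Option LaVal) →
    LaResult → List (LaRunElem S) → Prop where
  | memoHit {A : SubNFA Sigma S} {q : S} {i : ℕ} {M : S × ℕ → Option LaVal} {v : LaVal} :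
      M (q, i) = some v →
      MemoLaRun w A q i M M v.toResult [.memo q i, v.toResult.elem]
  | accept {A : SubNFA Sigma S} {q : S} {i : ℕ} {M : S × ℕ → Option LaVal} :
      M (q, i) = none → q ∈ A.F →
      MemoLaRun w A q i M (laRecord M q i (.successAt i)) (.successAt i)
        [.call q i, .succAt i]
  | eps {A : SubNFA Sigma S} {q q' : S} {i : ℕ} {M M' : S × ℕ → Option LaVal}
      {r : LaResult} {s : List (LaRunElem S)} :
      M (q, i) = none → q ∉ A.F → A.T q = SubTrans.eps q' →
      MemoLaRun w A q' i M M' r s →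
      MemoLaRun w A q i M (laRecord M' q i r) r (.call q i :: s ++ [r.elem])
  | branchNoFail {A : SubNFA Sigma S} {q q' q'' : S} {i : ℕ}
      {M M' : S × ℕ → Option LaVal} {r : LaResult} {s : List (LaRunElem S)} :
      M (q, i) = none → q ∉ A.F → A.T q = SubTrans.branch q' q'' →
      MemoLaRun w A q' i M M' r s → r ≠ .failure →
      MemoLaRun w A q i M (laRecord M' q i r) r (.call q i :: s ++ [r.elem])
  | branchFail {A : SubNFA Sigma S} {q q' q'' : S} {i : ℕ}
      {M M1 M2 : S × ℕ → Option LaVal} {r : LaResult} {s1 s2 : List (LaRunElem S)} :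
      M (q, i) = none → q ∉ A.F → A.T q = SubTrans.branch q' q'' →
      MemoLaRun w A q' i M M1 .failure s1 →
      MemoLaRun w A q'' i M1 M2 r s2 →
      MemoLaRun w A q i M (laRecord M2 q i r) r (.call q i :: s1 ++ s2 ++ [r.elem])
  | charSucc {A : SubNFA Sigma S} {q q' : S} {σ : Sigma} {i : ℕ}
      {M M' : S × ℕ → Option LaVal} {r : LaResult} {s : List (LaRunElem S)} :
      M (q, i) = none → q ∉ A.F → A.T q = SubTrans.char σ q' →
      w[i]? = some σ →
      MemoLaRun w A q' (i + 1) M M' r s →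
      MemoLaRun w A q i M (laRecord M' q i r) r (.call q i :: s ++ [r.elem])
  | charFail {A : SubNFA Sigma S} {q q' : S} {σ : Sigma} {i : ℕ}
      {M : S × ℕ → Option LaVal} :
      M (q, i) = none → q ∉ A.F → A.T q = SubTrans.char σ q' →
      w[i]? ≠ some σ →
      MemoLaRun w A q i M (laRecord M q i .failure) .failure [.call q i, .fail]
  | plaSucc {A A' : SubNFA Sigma S} {q q' : S} {i : ℕ}
      {M M1 M2 : S × ℕ → Option LaVal} {r1 r : LaResult} {s1 s2 : List (LaRunElem S)} :
      M (q, i) = none → q ∉ A.F → A.T q = SubTrans.sub Kind.pla A' q' →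
      MemoLaRun w A' A'.q0 i M M1 r1 s1 → r1 ≠ .failure →
      MemoLaRun w A q' i M1 M2 r s2 →
      MemoLaRun w A q i M (laRecord M2 q i r) r (.call q i :: s1 ++ s2 ++ [r.elem])
  | plaFail {A A' : SubNFA Sigma S} {q q' : S} {i : ℕ}
      {M M1 : S × ℕ → Option LaVal} {s1 : List (LaRunElem S)} :
      M (q, i) = none → q ∉ A.F → A.T q = SubTrans.sub Kind.pla A' q' →
      MemoLaRun w A' A'.q0 i M M1 .failure s1 →
      MemoLaRun w A q i M (laRecord M1 q i .failure) .failure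
        (.call q i :: s1 ++ [LaRunElem.fail])

/-! ## `Memo-at` -/

/-- Results of `Memo-at`: `SuccessAt(i', K)` with a set `K` of delayed memoization keys,
or `Failure(j)` with a nesting depth `j`. -/
inductive AtResult (S : Type) : Type where
  | successAt : ℕ → Finset (S × ℕ) → AtResult S
  | failure : ℕ → AtResult S

/-- Elements of runs of `Memo-at`: calls `C(q,i)`, memoization-table invocations
`M(q,i)`, and results `S(i')` and `F(j)`. -/
inductive AtRunElem (S : Type) : Type where
  | call : S → ℕ → AtRunElem S
  | memo : S → ℕ → AtRunElem S
  | succ : ℕ → AtRunElem S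
  | fail : ℕ → AtRunElem S
deriving DecidableEq

def AtRunElem.isRet : AtRunElem S → Bool
  | .succ _ => true
  | .fail _ => true
  | _ => false

def AtRunElem.isCall : AtRunElem S → Bool
  | .call _ _ => true
  | .memo _ _ => true
  | _ => false

def atMemoToCall : AtRunElem S → Option (AtRunElem S)
  | .memo q i => some (.call q i)
  | _ => none

def AtResult.elem {S : Type} : AtResult S → AtRunElem S
  | .successAt i _ => .succ i
  | .failure j => .fail j

/-- `f`, converting results of `Memo-at` to results of `Match-(la,at)`. -/
def AtResult.toResult {S : Type} : AtResult S → Result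
  | .successAt i _ => .successAt i
  | .failure _ => .failure

/-- The final step of `Memo-at`: on success, the key `(q,i)` is added to the set of
delayed keys. -/
def atFinal [DecidableEq S] (q : S) (i : ℕ) : AtResult S → AtResult S
  | .successAt i' K => .successAt i' (insert (q, i) K)
  | .failure j => .failure j

/-- The final recording of `Memo-at`: `M(q,i) := Failure(j)` if the result is
`Failure(j)`. -/
def atRecord [DecidableEq S] (M : S × ℕ → Option ℕ) (q : S) (i : ℕ) :
    AtResult S → (S × ℕ → Option ℕ)
  | .failure j => fun p => if p = (q, i) then some j else M p
  | _ => M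

/-- Batch recording `M(k) := Failure(j)` for every `k ∈ K`. -/
def atBatch [DecidableEq S] (M : S × ℕ → Option ℕ) (K : Finset (S × ℕ)) (j : ℕ) :
    S × ℕ → Option ℕ :=
  fun p => if p ∈ K then some j else M p

/-- Big-step semantics (with resulting memoization table and produced run) of the
memoized backtracking matching algorithm `Memo-at` for at-NFAs:
`MemoAtRun A0 w A q i M M' r s` means the call `Memo-at^M_{A0,A,w}(q, i)` (with the
whole automaton `A0` and current sub-automaton `A`) terminates with result `r`, final
memoization table `M'`, and produces the run `s`. -/
inductive MemoAtRun [DecidableEq S] (A0 : SubNFA Sigma S) (w : List Sigma) :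
    SubNFA Sigma S → S → ℕ → (S × ℕ → Option ℕ) → (S × ℕ → Option ℕ) →
    AtResult S → List (AtRunElem S) → Prop where
  | memoHit {A : SubNFA Sigma S} {q : S} {i j : ℕ} {M : S × ℕ → Option ℕ} :
      M (q, i) = some j →
      MemoAtRun A0 w A q i M M (.failure j) [.memo q i, .fail j]
  | accept {A : SubNFA Sigma S} {q : S} {i : ℕ} {M : S × ℕ → Option ℕ} :
      M (q, i) = none → q ∈ A.F →
      MemoAtRun A0 w A q i M M (.successAt i {(q, i)}) [.call q i, .succ i]
  | eps {A : SubNFA Sigma S} {q q' : S} {i : ℕ} {M M' : S × ℕ → Option ℕ}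
      {r : AtResult S} {s : List (AtRunElem S)} :
      M (q, i) = none → q ∉ A.F → A.T q = SubTrans.eps q' →
      MemoAtRun A0 w A q' i M M' r s →
      MemoAtRun A0 w A q i M (atRecord M' q i r) (atFinal q i r)
        (.call q i :: s ++ [r.elem])
  | branchNoBT {A : SubNFA Sigma S} {q q' q'' : S} {i : ℕ} {M M' : S × ℕ → Option ℕ}
      {r : AtResult S} {s : List (AtRunElem S)} :
      M (q, i) = none → q ∉ A.F → A.T q = SubTrans.branch q' q'' →
      MemoAtRun A0 w A q' i M M' r s →
      (∀ j, r = AtResult.failure j → j ≠ A0.nu q) →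
      MemoAtRun A0 w A q i M (atRecord M' q i r) (atFinal q i r)
        (.call q i :: s ++ [r.elem])
  | branchBTSucc {A : SubNFA Sigma S} {q q' q'' : S} {i i'' : ℕ} {K : Finset (S × ℕ)}
      {M M1 M2 : S × ℕ → Option ℕ} {s1 s2 : List (AtRunElem S)} :
      M (q, i) = none → q ∉ A.F → A.T q = SubTrans.branch q' q'' →
      MemoAtRun A0 w A q' i M M1 (.failure (A0.nu q)) s1 →
      MemoAtRun A0 w A q'' i M1 M2 (.successAt i'' K) s2 →
      MemoAtRun A0 w A q i M M2 (atFinal q i (.successAt i'' K))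
        (.call q i :: s1 ++ s2 ++ [AtRunElem.succ i''])
  | branchBTFail {A : SubNFA Sigma S} {q q' q'' : S} {i j' : ℕ}
      {M M1 M2 : S × ℕ → Option ℕ} {s1 s2 : List (AtRunElem S)} :
      M (q, i) = none → q ∉ A.F → A.T q = SubTrans.branch q' q'' →
      MemoAtRun A0 w A q' i M M1 (.failure (A0.nu q)) s1 →
      MemoAtRun A0 w A q'' i M1 M2 (.failure j') s2 →
      MemoAtRun A0 w A q i M (atRecord M2 q i (.failure (min (A0.nu q) j')))
        (.failure (min (A0.nu q) j'))
        (.call q i :: s1 ++ s2 ++ [AtRunElem.fail (min (A0.nu q) j')])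
  | charSucc {A : SubNFA Sigma S} {q q' : S} {σ : Sigma} {i : ℕ}
      {M M' : S × ℕ → Option ℕ} {r : AtResult S} {s : List (AtRunElem S)} :
      M (q, i) = none → q ∉ A.F → A.T q = SubTrans.char σ q' →
      w[i]? = some σ →
      MemoAtRun A0 w A q' (i + 1) M M' r s →
      MemoAtRun A0 w A q i M (atRecord M' q i r) (atFinal q i r)
        (.call q i :: s ++ [r.elem])
  | charFail {A : SubNFA Sigma S} {q q' : S} {σ : Sigma} {i : ℕ}
      {M : S × ℕ → Option ℕ} :
      M (q, i) = none → q ∉ A.F → A.T q = SubTrans.char σ q' →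
      w[i]? ≠ some σ →
      MemoAtRun A0 w A q i M (atRecord M q i (.failure (A0.nu q)))
        (.failure (A0.nu q)) [.call q i, .fail (A0.nu q)]
  | subSuccSucc {A A' : SubNFA Sigma S} {q q' : S} {i i' i'' : ℕ}
      {K' K'' : Finset (S × ℕ)} {M M1 M2 : S × ℕ → Option ℕ}
      {s1 s2 : List (AtRunElem S)} :
      M (q, i) = none → q ∉ A.F → A.T q = SubTrans.sub Kind.at A' q' →
      MemoAtRun A0 w A' A'.q0 i M M1 (.successAt i' K') s1 →
      MemoAtRun A0 w A q' i' M1 M2 (.successAt i'' K'') s2 →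
      MemoAtRun A0 w A q i M M2 (atFinal q i (.successAt i'' (K' ∪ K'')))
        (.call q i :: s1 ++ s2 ++ [AtRunElem.succ i''])
  | subSuccFail {A A' : SubNFA Sigma S} {q q' : S} {i i' j : ℕ} {K' : Finset (S × ℕ)}
      {M M1 M2 : S × ℕ → Option ℕ} {s1 s2 : List (AtRunElem S)} :
      M (q, i) = none → q ∉ A.F → A.T q = SubTrans.sub Kind.at A' q' →
      MemoAtRun A0 w A' A'.q0 i M M1 (.successAt i' K') s1 →
      MemoAtRun A0 w A q' i' M1 M2 (.failure j) s2 →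
      MemoAtRun A0 w A q i M (atRecord (atBatch M2 K' j) q i (.failure j)) (.failure j)
        (.call q i :: s1 ++ s2 ++ [AtRunElem.fail j])
  | subFailHigh {A A' : SubNFA Sigma S} {q q' : S} {i j : ℕ}
      {M M1 : S × ℕ → Option ℕ} {s1 : List (AtRunElem S)} :
      M (q, i) = none → q ∉ A.F → A.T q = SubTrans.sub Kind.at A' q' →
      MemoAtRun A0 w A' A'.q0 i M M1 (.failure j) s1 →
      A0.nu q < j →
      MemoAtRun A0 w A q i M (atRecord M1 q i (.failure (A0.nu q)))
        (.failure (A0.nu q)) (.call q i :: s1 ++ [AtRunElem.fail (A0.nu q)])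
  | subFailLow {A A' : SubNFA Sigma S} {q q' : S} {i j : ℕ}
      {M M1 : S × ℕ → Option ℕ} {s1 : List (AtRunElem S)} :
      M (q, i) = none → q ∉ A.F → A.T q = SubTrans.sub Kind.at A' q' →
      MemoAtRun A0 w A' A'.q0 i M M1 (.failure j) s1 →
      j ≤ A0.nu q →
      MemoAtRun A0 w A q i M (atRecord M1 q i (.failure j)) (.failure j)
        (.call q i :: s1 ++ [AtRunElem.fail j])

/-! ## The combined algorithm `Memo-(la,at)` -/

/-- Values of the memoization table of `Memo-(la,at)`: `Success` or `Failure(j)`. -/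
inductive LaAtVal : Type where
  | success : LaAtVal
  | failure : ℕ → LaAtVal

/-- Results of `Memo-(la,at)`: `SuccessAt(i', K)`, bare `Success`, or `Failure(j)`. -/
inductive LaAtResult (S : Type) : Type where
  | successAt : ℕ → Finset (S × ℕ) → LaAtResult S
  | success : LaAtResult S
  | failure : ℕ → LaAtResult S

def LaAtVal.toResult {S : Type} : LaAtVal → LaAtResult S
  | .success => .success
  | .failure j => .failure j

/-- `f`, converting results of `Memo-(la,at)` to results of `Match-(la,at)`
(undefined on the bare value `Success`). -/
def LaAtResult.toResult? {S : Type} : LaAtResult S → Option Result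
  | .successAt i _ => some (.successAt i)
  | .success => none
  | .failure _ => some .failure

def laAtFinal [DecidableEq S] (q : S) (i : ℕ) : LaAtResult S → LaAtResult S
  | .successAt i' K => .successAt i' (insert (q, i) K)
  | r => r

def laAtRecord [DecidableEq S] (M : S × ℕ → Option LaAtVal) (q : S) (i : ℕ) :
    LaAtResult S → (S × ℕ → Option LaAtVal)
  | .successAt _ _ => M
  | .success => fun p => if p = (q, i) then some LaAtVal.success else M p
  | .failure j => fun p => if p = (q, i) then some (LaAtVal.failure j) else M p

def laAtBatch [DecidableEq S] (M : S × ℕ → Option LaAtVal) (K : Finset (S × ℕ))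
    (v : LaAtVal) : S × ℕ → Option LaAtVal :=
  fun p => if p ∈ K then some v else M p

/-- Big-step semantics (with resulting memoization table and the number of recursive
calls made) of the combined memoized backtracking matching algorithm `Memo-(la,at)`:
`MemoLaAtRun w A0 A q i M M' r n` means the call `Memo-(la,at)^M_{A0,A,w}(q, i)`
terminates with result `r`, final memoization table `M'`, making `n` calls in total.
On a positive look-ahead transition, the sub-automaton becomes the new whole automaton
(so nesting depths of atomic grouping are reset by look-around operators). -/
inductive MemoLaAtRun [DecidableEq S] (w : List Sigma) :
    SubNFA Sigma S → SubNFA Sigma S → S → ℕ →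
    (S × ℕ → Option LaAtVal) → (S × ℕ → Option LaAtVal) → LaAtResult S → ℕ → Prop where
  | memoHit {A0 A : SubNFA Sigma S} {q : S} {i : ℕ} {M : S × ℕ → Option LaAtVal}
      {v : LaAtVal} :
      M (q, i) = some v →
      MemoLaAtRun w A0 A q i M M v.toResult 1
  | accept {A0 A : SubNFA Sigma S} {q : S} {i : ℕ} {M : S × ℕ → Option LaAtVal} :
      M (q, i) = none → q ∈ A.F →
      MemoLaAtRun w A0 A q i M M (.successAt i {(q, i)}) 1
  | eps {A0 A : SubNFA Sigma S} {q q' : S} {i : ℕ} {M M' : S × ℕ → Option LaAtVal}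
      {r : LaAtResult S} {n : ℕ} :
      M (q, i) = none → q ∉ A.F → A.T q = SubTrans.eps q' →
      MemoLaAtRun w A0 A q' i M M' r n →
      MemoLaAtRun w A0 A q i M (laAtRecord M' q i (laAtFinal q i r)) (laAtFinal q i r)
        (n + 1)
  | branchNoBT {A0 A : SubNFA Sigma S} {q q' q'' : S} {i : ℕ}
      {M M' : S × ℕ → Option LaAtVal} {r : LaAtResult S} {n : ℕ} :
      M (q, i) = none → q ∉ A.F → A.T q = SubTrans.branch q' q'' →
      MemoLaAtRun w A0 A q' i M M' r n →
      (∀ j, r = LaAtResult.failure j → j ≠ A0.nu q) →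
      MemoLaAtRun w A0 A q i M (laAtRecord M' q i (laAtFinal q i r)) (laAtFinal q i r)
        (n + 1)
  | branchBTFail {A0 A : SubNFA Sigma S} {q q' q'' : S} {i j' : ℕ}
      {M M1 M2 : S × ℕ → Option LaAtVal} {n1 n2 : ℕ} :
      M (q, i) = none → q ∉ A.F → A.T q = SubTrans.branch q' q'' →
      MemoLaAtRun w A0 A q' i M M1 (.failure (A0.nu q)) n1 →
      MemoLaAtRun w A0 A q'' i M1 M2 (.failure j') n2 →
      MemoLaAtRun w A0 A q i M
        (laAtRecord M2 q i (.failure (min (A0.nu q) j')))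
        (.failure (min (A0.nu q) j')) (n1 + n2 + 1)
  | branchBTOther {A0 A : SubNFA Sigma S} {q q' q'' : S} {i : ℕ}
      {M M1 M2 : S × ℕ → Option LaAtVal} {r : LaAtResult S} {n1 n2 : ℕ} :
      M (q, i) = none → q ∉ A.F → A.T q = SubTrans.branch q' q'' →
      MemoLaAtRun w A0 A q' i M M1 (.failure (A0.nu q)) n1 →
      MemoLaAtRun w A0 A q'' i M1 M2 r n2 →
      (∀ j, r ≠ LaAtResult.failure j) →
      MemoLaAtRun w A0 A q i M (laAtRecord M2 q i (laAtFinal q i r)) (laAtFinal q i r)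
        (n1 + n2 + 1)
  | charSucc {A0 A : SubNFA Sigma S} {q q' : S} {σ : Sigma} {i : ℕ}
      {M M' : S × ℕ → Option LaAtVal} {r : LaAtResult S} {n : ℕ} :
      M (q, i) = none → q ∉ A.F → A.T q = SubTrans.char σ q' →
      w[i]? = some σ →
      MemoLaAtRun w A0 A q' (i + 1) M M' r n →
      MemoLaAtRun w A0 A q i M (laAtRecord M' q i (laAtFinal q i r)) (laAtFinal q i r)
        (n + 1)
  | charFail {A0 A : SubNFA Sigma S} {q q' : S} {σ : Sigma} {i : ℕ}
      {M : S × ℕ → Option LaAtVal} :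
      M (q, i) = none → q ∉ A.F → A.T q = SubTrans.char σ q' →
      w[i]? ≠ some σ →
      MemoLaAtRun w A0 A q i M (laAtRecord M q i (.failure (A0.nu q)))
        (.failure (A0.nu q)) 1
  | plaSuccAt {A0 A A' : SubNFA Sigma S} {q q' : S} {i i' : ℕ} {K' : Finset (S × ℕ)}
      {M M1 M2 : S × ℕ → Option LaAtVal} {r : LaAtResult S} {n1 n2 : ℕ} :
      M (q, i) = none → q ∉ A.F → A.T q = SubTrans.sub Kind.pla A' q' →
      MemoLaAtRun w A' A' A'.q0 i M M1 (.successAt i' K') n1 →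
      MemoLaAtRun w A0 A q' i (laAtBatch M1 K' LaAtVal.success) M2 r n2 →
      MemoLaAtRun w A0 A q i M (laAtRecord M2 q i (laAtFinal q i r)) (laAtFinal q i r)
        (n1 + n2 + 1)
  | plaBare {A0 A A' : SubNFA Sigma S} {q q' : S} {i : ℕ}
      {M M1 M2 : S × ℕ → Option LaAtVal} {r : LaAtResult S} {n1 n2 : ℕ} :
      M (q, i) = none → q ∉ A.F → A.T q = SubTrans.sub Kind.pla A' q' →
      MemoLaAtRun w A' A' A'.q0 i M M1 .success n1 →
      MemoLaAtRun w A0 A q' i M1 M2 r n2 →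
      MemoLaAtRun w A0 A q i M (laAtRecord M2 q i (laAtFinal q i r)) (laAtFinal q i r)
        (n1 + n2 + 1)
  | plaFail {A0 A A' : SubNFA Sigma S} {q q' : S} {i j : ℕ}
      {M M1 : S × ℕ → Option LaAtVal} {n1 : ℕ} :
      M (q, i) = none → q ∉ A.F → A.T q = SubTrans.sub Kind.pla A' q' →
      MemoLaAtRun w A' A' A'.q0 i M M1 (.failure j) n1 →
      MemoLaAtRun w A0 A q i M (laAtRecord M1 q i (.failure (A0.nu q)))
        (.failure (A0.nu q)) (n1 + 1)
  | atSuccSucc {A0 A A' : SubNFA Sigma S} {q q' : S} {i i' i'' : ℕ}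
      {K' K'' : Finset (S × ℕ)} {M M1 M2 : S × ℕ → Option LaAtVal} {n1 n2 : ℕ} :
      M (q, i) = none → q ∉ A.F → A.T q = SubTrans.sub Kind.at A' q' →
      MemoLaAtRun w A0 A' A'.q0 i M M1 (.successAt i' K') n1 →
      MemoLaAtRun w A0 A q' i' M1 M2 (.successAt i'' K'') n2 →
      MemoLaAtRun w A0 A q i M M2
        (laAtFinal q i (.successAt i'' (K' ∪ K''))) (n1 + n2 + 1)
  | atSuccBare {A0 A A' : SubNFA Sigma S} {q q' : S} {i i' : ℕ} {K' : Finset (S × ℕ)}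
      {M M1 M2 : S × ℕ → Option LaAtVal} {n1 n2 : ℕ} :
      M (q, i) = none → q ∉ A.F → A.T q = SubTrans.sub Kind.at A' q' →
      MemoLaAtRun w A0 A' A'.q0 i M M1 (.successAt i' K') n1 →
      MemoLaAtRun w A0 A q' i' M1 M2 .success n2 →
      MemoLaAtRun w A0 A q i M
        (laAtRecord (laAtBatch M2 K' LaAtVal.success) q i .success) .success
        (n1 + n2 + 1)
  | atSuccFail {A0 A A' : SubNFA Sigma S} {q q' : S} {i i' j : ℕ} {K' : Finset (S × ℕ)}
      {M M1 M2 : S × ℕ → Option LaAtVal} {n1 n2 : ℕ} :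
      M (q, i) = none → q ∉ A.F → A.T q = SubTrans.sub Kind.at A' q' →
      MemoLaAtRun w A0 A' A'.q0 i M M1 (.successAt i' K') n1 →
      MemoLaAtRun w A0 A q' i' M1 M2 (.failure j) n2 →
      MemoLaAtRun w A0 A q i M
        (laAtRecord (laAtBatch M2 K' (LaAtVal.failure j)) q i (.failure j))
        (.failure j) (n1 + n2 + 1)
  | atBare {A0 A A' : SubNFA Sigma S} {q q' : S} {i : ℕ}
      {M M1 : S × ℕ → Option LaAtVal} {n1 : ℕ} :
      M (q, i) = none → q ∉ A.F → A.T q = SubTrans.sub Kind.at A' q' →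
      MemoLaAtRun w A0 A' A'.q0 i M M1 .success n1 →
      MemoLaAtRun w A0 A q i M (laAtRecord M1 q i .success) .success (n1 + 1)
  | atFailHigh {A0 A A' : SubNFA Sigma S} {q q' : S} {i j : ℕ}
      {M M1 : S × ℕ → Option LaAtVal} {n1 : ℕ} :
      M (q, i) = none → q ∉ A.F → A.T q = SubTrans.sub Kind.at A' q' →
      MemoLaAtRun w A0 A' A'.q0 i M M1 (.failure j) n1 →
      A0.nu q < j →
      MemoLaAtRun w A0 A q i M (laAtRecord M1 q i (.failure (A0.nu q)))
        (.failure (A0.nu q)) (n1 + 1)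
  | atFailLow {A0 A A' : SubNFA Sigma S} {q q' : S} {i j : ℕ}
      {M M1 : S × ℕ → Option LaAtVal} {n1 : ℕ} :
      M (q, i) = none → q ∉ A.F → A.T q = SubTrans.sub Kind.at A' q' →
      MemoLaAtRun w A0 A' A'.q0 i M M1 (.failure j) n1 →
      j ≤ A0.nu q →
      MemoLaAtRun w A0 A q i M (laAtRecord M1 q i (.failure j)) (.failure j) (n1 + 1)



/-- States of the proper sub-automata. -/
def strictStates (B : SubNFA Sigma S) : List S :=
  ((B.Q.flatMap (fun q => SubTrans.subCompsD (B.T q))).map Prod.fst).flatMap SubNFA.Q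

theorem compsD_eq (B : SubNFA Sigma S) :
    B.compsD = (B, 0) :: B.Q.flatMap (fun q => SubTrans.subCompsD (B.T q)) := by
  cases B
  rw [SubNFA.compsD]
  rfl

theorem allStates_eq (B : SubNFA Sigma S) : B.allStates = B.Q ++ strictStates B := by
  simp only [SubNFA.allStates, SubNFA.comps, strictStates]
  rw [compsD_eq]
  simp

theorem comps_sub_sublist {B A' : SubNFA Sigma S} {q q' : S} {k : Kind} (hq : q ∈ B.Q)
    (h : B.T q = SubTrans.sub k A' q') :
    A'.comps.Sublist
      ((B.Q.flatMap (fun q => SubTrans.subCompsD (B.T q))).map Prod.fst) := by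
  have h1 : A'.comps = (SubTrans.subCompsD (B.T q)).map Prod.fst := by
    rw [h, SubTrans.subCompsD]
    simp [SubNFA.comps, Function.comp_def]
  rw [h1]
  apply List.Sublist.map
  have h2 : [q].Sublist B.Q := List.singleton_sublist.mpr hq
  have h3 := h2.flatMap (fun q => SubTrans.subCompsD (B.T q))
  simpa using h3

theorem comps_sublist {B A' : SubNFA Sigma S} {q q' : S} {k : Kind} (hq : q ∈ B.Q)
    (h : B.T q = SubTrans.sub k A' q') : A'.comps.Sublist B.comps := by
  have h1 := comps_sub_sublist hq h
  have h2 : B.comps =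
      B :: ((B.Q.flatMap (fun q => SubTrans.subCompsD (B.T q))).map Prod.fst) := by
    rw [SubNFA.comps, compsD_eq]
    rfl
  rw [h2]
  exact h1.cons _

theorem allStates_sub {B A' : SubNFA Sigma S} {q q' : S} {k : Kind} (hq : q ∈ B.Q)
    (h : B.T q = SubTrans.sub k A' q') {p : S} (hp : p ∈ A'.allStates) :
    p ∈ strictStates B :=
  ((comps_sub_sublist hq h).flatMap SubNFA.Q).subset hp

theorem WF_sub {B A' : SubNFA Sigma S} {q q' : S} {k : Kind} (hWF : B.WF) (hq : q ∈ B.Q)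
    (h : B.T q = SubTrans.sub k A' q') : A'.WF :=
  ⟨fun C hC => hWF.1 C ((comps_sublist hq h).subset hC),
    ((comps_sublist hq h).flatMap SubNFA.Q).nodup hWF.2⟩

theorem epsStep_sub {B A' : SubNFA Sigma S} {q q' : S} {k : Kind} (hq : q ∈ B.Q)
    (h : B.T q = SubTrans.sub k A' q') {x y : S} (hx : A'.epsStep x y) : B.epsStep x y := by
  obtain ⟨C, hC, hr⟩ := hx
  exact ⟨C, (comps_sublist hq h).subset hC, hr⟩

theorem NoEpsLoops_sub {B A' : SubNFA Sigma S} {q q' : S} {k : Kind} (hL : B.NoEpsLoops)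
    (hq : q ∈ B.Q) (h : B.T q = SubTrans.sub k A' q') : A'.NoEpsLoops :=
  fun x hx => hL x (Relation.TransGen.mono (fun _ _ => epsStep_sub hq h) _ _ hx)

theorem self_mem_comps (B : SubNFA Sigma S) : B ∈ B.comps := by
  rw [SubNFA.comps, compsD_eq]
  simp

theorem not_strict {B : SubNFA Sigma S} (hWF : B.WF) {q : S} (hq : q ∈ B.Q) :
    q ∉ strictStates B := by
  have h := hWF.2
  rw [allStates_eq, List.nodup_append] at h
  intro h'
  exact h.2.2 q hq q h' rfl

theorem elem_ne_call (r : LaResult) (p : S) (j : ℕ) :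
    LaRunElem.call p j ≠ (r.elem : LaRunElem S) := by
  cases r <;> simp [LaResult.elem]

/-- Which calls may occur in a run started at `(q, i)` in `B`. -/
def Reach (B : SubNFA Sigma S) (q : S) (i : ℕ) (p : S) (j : ℕ) : Prop :=
  (p ∈ B.Q ∧ (i < j ∨ (i = j ∧ Relation.ReflTransGen B.epsStep q p))) ∨ p ∈ strictStates B

theorem Reach.refl {B : SubNFA Sigma S} {q : S} {i : ℕ} (hq : q ∈ B.Q) : Reach B q i q i :=
  Or.inl ⟨hq, Or.inr ⟨rfl, .refl⟩⟩

theorem Reach.head {B : SubNFA Sigma S} {q q' p : S} {i j : ℕ} (h : B.epsStep q q')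
    (hr : Reach B q' i p j) : Reach B q i p j := by
  rcases hr with ⟨hp, h1 | ⟨h1, h2⟩⟩ | hr
  · exact Or.inl ⟨hp, Or.inl h1⟩
  · exact Or.inl ⟨hp, Or.inr ⟨h1, .head h h2⟩⟩
  · exact Or.inr hr

theorem Reach.char {B : SubNFA Sigma S} {q q' p : S} {i j : ℕ}
    (hr : Reach B q' (i + 1) p j) : Reach B q i p j := by
  rcases hr with ⟨hp, h1 | ⟨h1, h2⟩⟩ | hr
  · exact Or.inl ⟨hp, Or.inl (by omega)⟩
  · exact Or.inl ⟨hp, Or.inl (by omega)⟩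
  · exact Or.inr hr

theorem Reach.sub {B A' : SubNFA Sigma S} {q q' q1 p : S} {i j : ℕ} {k : Kind}
    (hq : q ∈ B.Q) (h : B.T q = SubTrans.sub k A' q') (hr : Reach A' q1 i p j) :
    p ∈ strictStates B := by
  apply allStates_sub hq h
  rw [allStates_eq, List.mem_append]
  rcases hr with ⟨hp, _⟩ | hp
  · exact Or.inl hp
  · exact Or.inr hp

theorem Reach.not_self {B : SubNFA Sigma S} {q q' : S} {i : ℕ} (hWF : B.WF)
    (hL : B.NoEpsLoops) (hq : q ∈ B.Q) (h : B.epsStep q q') : ¬ Reach B q' i q i := by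
  rintro (⟨_, h1 | ⟨_, h2⟩⟩ | hr)
  · omega
  · exact hL q (Relation.TransGen.head' h h2)
  · exact not_strict hWF hq hr

theorem Reach.not_self_char {B : SubNFA Sigma S} {q q' : S} {i : ℕ} (hWF : B.WF)
    (hq : q ∈ B.Q) : ¬ Reach B q' (i + 1) q i := by
  rintro (⟨_, h1 | ⟨h1, _⟩⟩ | hr)
  · omega
  · omega
  · exact not_strict hWF hq hr

theorem localOK {B : SubNFA Sigma S} (hWF : B.WF) : B.LocalOK := hWF.1 B (self_mem_comps B)

theorem eps_ok {B : SubNFA Sigma S} (hWF : B.WF) {q q' : S} (hq : q ∈ B.Q) (hF : q ∉ B.F)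
    (h : B.T q = .eps q') : q' ∈ B.Q ∧ B.epsStep q q' := by
  have := (localOK hWF).2.2 q hq hF
  rw [h] at this
  exact ⟨this, B, self_mem_comps B, hq, hF, Or.inl h⟩

theorem branch_ok {B : SubNFA Sigma S} (hWF : B.WF) {q q' q'' : S} (hq : q ∈ B.Q)
    (hF : q ∉ B.F) (h : B.T q = .branch q' q'') :
    (q' ∈ B.Q ∧ B.epsStep q q') ∧ (q'' ∈ B.Q ∧ B.epsStep q q'') := by
  have := (localOK hWF).2.2 q hq hF
  rw [h] at this
  exact ⟨⟨this.1, B, self_mem_comps B, hq, hF, Or.inr (Or.inl ⟨_, h⟩)⟩,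
    this.2, B, self_mem_comps B, hq, hF, Or.inr (Or.inr (Or.inl ⟨_, h⟩))⟩

theorem char_ok {B : SubNFA Sigma S} (hWF : B.WF) {q q' : S} {σ : Sigma} (hq : q ∈ B.Q)
    (hF : q ∉ B.F) (h : B.T q = .char σ q') : q' ∈ B.Q := by
  have := (localOK hWF).2.2 q hq hF
  rw [h] at this
  exact this

theorem pla_ok {B A' : SubNFA Sigma S} (hWF : B.WF) {q q' : S} (hq : q ∈ B.Q)
    (hF : q ∉ B.F) (h : B.T q = .sub .pla A' q') :
    (q' ∈ B.Q ∧ B.epsStep q q') ∧ A'.q0 ∈ A'.Q := by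
  have := (localOK hWF).2.2 q hq hF
  rw [h] at this
  exact ⟨⟨this, B, self_mem_comps B, hq, hF,
    Or.inr (Or.inr (Or.inr ⟨_, _, h, by decide⟩))⟩, (localOK (WF_sub hWF hq h)).1⟩

theorem laRecord_ne [DecidableEq S] {M : S × ℕ → Option LaVal} {q : S} {i : ℕ} {r : LaResult}
    {x : S × ℕ} (h : x = (q, i) ∨ M x ≠ none) : laRecord M q i r x ≠ none := by
  unfold laRecord
  split_ifs with h1
  · simp
  · exact h.resolve_left h1

theorem mem_wrap {q p : S} {i j : ℕ} {r : LaResult} {s : List (LaRunElem S)}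
    (h : LaRunElem.call p j ∈ LaRunElem.call q i :: s ++ [r.elem]) :
    (p = q ∧ j = i) ∨ LaRunElem.call p j ∈ s := by
  simpa [elem_ne_call] using h

theorem count_wrap [DecidableEq S] {q p : S} {i j : ℕ} {r : LaResult}
    {s : List (LaRunElem S)}
    (h1 : LaRunElem.call q i ∉ s) (h2 : s.count (LaRunElem.call p j) ≤ 1) :
    (LaRunElem.call q i :: s ++ [r.elem]).count (LaRunElem.call p j) ≤ 1 := by
  have h3 : List.count (LaRunElem.call p j) [(r.elem : LaRunElem S)] = 0 := by
    rw [List.count_eq_zero]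
    simpa using elem_ne_call r p j
  rw [List.count_append, h3, List.count_cons]
  split_ifs with h
  · have h4 := eq_of_beq h
    rw [← h4, List.count_eq_zero.mpr h1]
  · omega

theorem count_app [DecidableEq S] {M1 : S × ℕ → Option LaVal} {p : S} {j : ℕ}
    {s1 s2 : List (LaRunElem S)}
    (h1 : ∀ p j, LaRunElem.call p j ∈ s1 → M1 (p, j) ≠ none)
    (h2 : ∀ p j, LaRunElem.call p j ∈ s2 → M1 (p, j) = none)
    (c1 : s1.count (LaRunElem.call p j) ≤ 1) (c2 : s2.count (LaRunElem.call p j) ≤ 1) :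
    (s1 ++ s2).count (LaRunElem.call p j) ≤ 1 := by
  rw [List.count_append]
  by_cases h : LaRunElem.call p j ∈ s1
  · have h3 : LaRunElem.call p j ∉ s2 := fun h3 => h1 p j h (h2 p j h3)
    rw [List.count_eq_zero.mpr h3]
    omega
  · rw [List.count_eq_zero.mpr h]
    omega

/-- Effect of a run on the memoization table. -/
theorem table_inv [DecidableEq S] {w : List Sigma} {B : SubNFA Sigma S} {q : S} {i : ℕ}
    {M M' : S × ℕ → Option LaVal} {r : LaResult} {s : List (LaRunElem S)}
    (h : MemoLaRun w B q i M M' r s) :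
    (∀ x, M x ≠ none → M' x ≠ none) ∧
    (∀ p j, LaRunElem.call p j ∈ s → M (p, j) = none) ∧
    (∀ p j, LaRunElem.call p j ∈ s → M' (p, j) ≠ none) := by
  have base : ∀ {q : S} {i : ℕ} {M : S × ℕ → Option LaVal} {r r' : LaResult},
      M (q, i) = none →
      (∀ x, M x ≠ none → laRecord M q i r x ≠ none) ∧
      (∀ p j, LaRunElem.call p j ∈ LaRunElem.call q i :: [] ++ [r'.elem] → M (p, j) = none) ∧
      (∀ p j, LaRunElem.call p j ∈ LaRunElem.call q i :: [] ++ [r'.elem] →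
        laRecord M q i r (p, j) ≠ none) := by
    intro q i M r r' hM
    refine ⟨fun x hx => laRecord_ne (Or.inr hx), fun p j hm => ?_, fun p j hm => ?_⟩
    · rcases mem_wrap hm with ⟨rfl, rfl⟩ | hm
      · exact hM
      · simp at hm
    · rcases mem_wrap hm with ⟨rfl, rfl⟩ | hm
      · exact laRecord_ne (Or.inl rfl)
      · simp at hm
  have one : ∀ {q : S} {i : ℕ} {M M' : S × ℕ → Option LaVal} {r r' : LaResult}
      {s : List (LaRunElem S)}, M (q, i) = none →
      ((∀ x, M x ≠ none → M' x ≠ none) ∧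
      (∀ p j, LaRunElem.call p j ∈ s → M (p, j) = none) ∧
      (∀ p j, LaRunElem.call p j ∈ s → M' (p, j) ≠ none)) →
      (∀ x, M x ≠ none → laRecord M' q i r x ≠ none) ∧
      (∀ p j, LaRunElem.call p j ∈ LaRunElem.call q i :: s ++ [r'.elem] → M (p, j) = none) ∧
      (∀ p j, LaRunElem.call p j ∈ LaRunElem.call q i :: s ++ [r'.elem] →
        laRecord M' q i r (p, j) ≠ none) := by
    intro q i M M' r r' s hM ih
    refine ⟨fun x hx => laRecord_ne (Or.inr (ih.1 x hx)), fun p j hm => ?_, fun p j hm => ?_⟩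
    · rcases mem_wrap hm with ⟨rfl, rfl⟩ | hm
      · exact hM
      · exact ih.2.1 p j hm
    · rcases mem_wrap hm with ⟨rfl, rfl⟩ | hm
      · exact laRecord_ne (Or.inl rfl)
      · exact laRecord_ne (Or.inr (ih.2.2 p j hm))
  have comb : ∀ {M M1 M2 : S × ℕ → Option LaVal} {s1 s2 : List (LaRunElem S)},
      ((∀ x, M x ≠ none → M1 x ≠ none) ∧
      (∀ p j, LaRunElem.call p j ∈ s1 → M (p, j) = none) ∧
      (∀ p j, LaRunElem.call p j ∈ s1 → M1 (p, j) ≠ none)) →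
      ((∀ x, M1 x ≠ none → M2 x ≠ none) ∧
      (∀ p j, LaRunElem.call p j ∈ s2 → M1 (p, j) = none) ∧
      (∀ p j, LaRunElem.call p j ∈ s2 → M2 (p, j) ≠ none)) →
      ((∀ x, M x ≠ none → M2 x ≠ none) ∧
      (∀ p j, LaRunElem.call p j ∈ s1 ++ s2 → M (p, j) = none) ∧
      (∀ p j, LaRunElem.call p j ∈ s1 ++ s2 → M2 (p, j) ≠ none)) := by
    intro M M1 M2 s1 s2 a b
    refine ⟨fun x hx => b.1 x (a.1 x hx), fun p j hm => ?_, fun p j hm => ?_⟩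
    · rcases List.mem_append.mp hm with hm | hm
      · exact a.2.1 p j hm
      · by_contra hc
        exact a.1 _ hc (b.2.1 p j hm)
    · rcases List.mem_append.mp hm with hm | hm
      · exact b.1 _ (a.2.2 p j hm)
      · exact b.2.2 p j hm
  induction h with
  | memoHit hM =>
    refine ⟨fun x hx => hx, fun p j hm => ?_, fun p j hm => ?_⟩ <;>
      simp [elem_ne_call] at hm
  | @accept A q i M hM _ => exact base (r' := .successAt i) hM
  | eps hM _ _ _ ih => exact one hM ih
  | branchNoFail hM _ _ _ _ ih => exact one hM ih
  | branchFail hM _ _ _ _ ih1 ih2 => exact one hM (comb ih1 ih2)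
  | charSucc hM _ _ _ _ ih => exact one hM ih
  | charFail hM _ _ _ => exact base (r' := .failure) hM
  | plaSucc hM _ _ _ _ _ ih1 ih2 => exact one hM (comb ih1 ih2)
  | plaFail hM _ _ _ ih => exact one (r' := .failure) hM ih

/-- All calls in a run are reachable from its starting point. -/
theorem reach_inv [DecidableEq S] {w : List Sigma} {B : SubNFA Sigma S} {q : S} {i : ℕ}
    {M M' : S × ℕ → Option LaVal} {r : LaResult} {s : List (LaRunElem S)}
    (h : MemoLaRun w B q i M M' r s) (hWF : B.WF) (hq : q ∈ B.Q) :
    ∀ p j, LaRunElem.call p j ∈ s → Reach B q i p j := by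
  have wrap : ∀ {B : SubNFA Sigma S} {q : S} {i : ℕ} {r' : LaResult}
      {s : List (LaRunElem S)}, q ∈ B.Q →
      (∀ p j, LaRunElem.call p j ∈ s → Reach B q i p j) →
      ∀ p j, LaRunElem.call p j ∈ LaRunElem.call q i :: s ++ [r'.elem] →
        Reach B q i p j := by
    intro B q i r' s hq ih p j hm
    rcases mem_wrap hm with ⟨rfl, rfl⟩ | hm
    · exact Reach.refl hq
    · exact ih p j hm
  induction h with
  | memoHit hM =>
    intro p j hm
    simp [elem_ne_call] at hm
  | @accept A q i M hM _ =>
    exact wrap (r' := .successAt i) (s := []) hq (by simp)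
  | eps hM hF hT _ ih =>
    obtain ⟨h1, h2⟩ := eps_ok hWF hq hF hT
    exact wrap hq fun p j hm => (ih hWF h1 p j hm).head h2
  | branchNoFail hM hF hT _ _ ih =>
    obtain ⟨⟨h1, h2⟩, _⟩ := branch_ok hWF hq hF hT
    exact wrap hq fun p j hm => (ih hWF h1 p j hm).head h2
  | branchFail hM hF hT _ _ ih1 ih2 =>
    obtain ⟨⟨h1, h2⟩, h3, h4⟩ := branch_ok hWF hq hF hT
    refine wrap hq fun p j hm => ?_
    rcases List.mem_append.mp hm with hm | hm
    · exact (ih1 hWF h1 p j hm).head h2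
    · exact (ih2 hWF h3 p j hm).head h4
  | charSucc hM hF hT _ _ ih =>
    exact wrap hq fun p j hm => (ih hWF (char_ok hWF hq hF hT) p j hm).char
  | charFail hM _ _ _ =>
    exact wrap (r' := .failure) (s := []) hq (by simp)
  | plaSucc hM hF hT _ _ _ ih1 ih2 =>
    obtain ⟨⟨h1, h2⟩, h3⟩ := pla_ok hWF hq hF hT
    refine wrap hq fun p j hm => ?_
    rcases List.mem_append.mp hm with hm | hm
    · exact Or.inr ((ih1 (WF_sub hWF hq hT) h3 p j hm).sub hq hT)
    · exact (ih2 hWF h1 p j hm).head h2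
  | plaFail hM hF hT _ ih =>
    obtain ⟨_, h3⟩ := pla_ok hWF hq hF hT
    exact wrap (r' := .failure) hq fun p j hm =>
      Or.inr ((ih (WF_sub hWF hq hT) h3 p j hm).sub hq hT)

theorem count_inv [DecidableEq S] {w : List Sigma} {B : SubNFA Sigma S} {q : S} {i : ℕ}
    {M M' : S × ℕ → Option LaVal} {r : LaResult} {s : List (LaRunElem S)}
    (h : MemoLaRun w B q i M M' r s) (hWF : B.WF) (hL : B.NoEpsLoops) (hq : q ∈ B.Q)
    (p : S) (j : ℕ) : s.count (LaRunElem.call p j) ≤ 1 := by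
  induction h with
  | @memoHit A q i M v hM =>
    have : LaRunElem.call p j ∉ [LaRunElem.memo q i, v.toResult.elem] := by
      simp [elem_ne_call]
    rw [List.count_eq_zero.mpr this]
    omega
  | @accept A q i M hM _ =>
    exact count_wrap (r := .successAt i) (s := []) (by simp) (by simp)
  | eps hM hF hT hr ih =>
    obtain ⟨h1, h2⟩ := eps_ok hWF hq hF hT
    exact count_wrap
      (fun hm => Reach.not_self hWF hL hq h2 (reach_inv hr hWF h1 _ _ hm)) (ih hWF hL h1)
  | branchNoFail hM hF hT hr _ ih =>
    obtain ⟨⟨h1, h2⟩, _⟩ := branch_ok hWF hq hF hT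
    exact count_wrap
      (fun hm => Reach.not_self hWF hL hq h2 (reach_inv hr hWF h1 _ _ hm)) (ih hWF hL h1)
  | branchFail hM hF hT hr1 hr2 ih1 ih2 =>
    obtain ⟨⟨h1, h2⟩, h3, h4⟩ := branch_ok hWF hq hF hT
    refine count_wrap (fun hm => ?_) (count_app (table_inv hr1).2.2 (table_inv hr2).2.1
      (ih1 hWF hL h1) (ih2 hWF hL h3))
    rcases List.mem_append.mp hm with hm | hm
    · exact Reach.not_self hWF hL hq h2 (reach_inv hr1 hWF h1 _ _ hm)
    · exact Reach.not_self hWF hL hq h4 (reach_inv hr2 hWF h3 _ _ hm)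
  | charSucc hM hF hT _ hr ih =>
    have h1 := char_ok hWF hq hF hT
    exact count_wrap
      (fun hm => Reach.not_self_char hWF hq (reach_inv hr hWF h1 _ _ hm)) (ih hWF hL h1)
  | charFail hM _ _ _ =>
    exact count_wrap (r := .failure) (s := []) (by simp) (by simp)
  | plaSucc hM hF hT hr1 _ hr2 ih1 ih2 =>
    obtain ⟨⟨h1, h2⟩, h3⟩ := pla_ok hWF hq hF hT
    refine count_wrap (fun hm => ?_) (count_app (table_inv hr1).2.2 (table_inv hr2).2.1
      (ih1 (WF_sub hWF hq hT) (NoEpsLoops_sub hL hq hT) h3) (ih2 hWF hL h1))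
    rcases List.mem_append.mp hm with hm | hm
    · exact not_strict hWF hq ((reach_inv hr1 (WF_sub hWF hq hT) h3 _ _ hm).sub hq hT)
    · exact Reach.not_self hWF hL hq h2 (reach_inv hr2 hWF h1 _ _ hm)
  | plaFail hM hF hT hr ih =>
    obtain ⟨_, h3⟩ := pla_ok hWF hq hF hT
    exact count_wrap (r := .failure)
      (fun hm => not_strict hWF hq
        ((reach_inv hr (WF_sub hWF hq hT) h3 _ _ hm).sub hq hT))
      (ih (WF_sub hWF hq hT) (NoEpsLoops_sub hL hq hT) h3)

/-- **Lemma 8** (each (state, position) pair is executed at most once by `Memo-la`):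
for every run `s` of an execution of `Memo-la`, every state `q ∈ P`, and every position
`i ∈ {0, …, |w|}`, the element `C(q, i)` appears at most once in `s`. -/
theorem memoLa_call_once {Sigma S : Type} [DecidableEq S]
    (A : SubNFA Sigma S) (hWF : A.WF) (hLa : A.IsLaNFA) (hLoop : A.NoEpsLoops)
    (w : List Sigma) (i0 : ℕ) (hi0 : i0 ≤ w.length)
    {M' : S × ℕ → Option LaVal} {r : LaResult} {s : List (LaRunElem S)}
    (hrun : MemoLaRun w A A.q0 i0 (fun _ => none) M' r s)
    (q : S) (hq : q ∈ A.allStates) (i : ℕ) (hi : i ≤ w.length) :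
    s.count (LaRunElem.call q i) ≤ 1 := by
  exact count_inv hrun hWF hLoop (localOK hWF).1 q i

end RegexMemo
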